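/- arXiv:2410.22730 — 3 statements merged into one kernel-verified Lean document; each statement's English description precedes it below -/
import Mathlib

section
/- Let α : ℕ → (ℕ →. ℕ) be an acceptable numbering of the partial computable functions, i.e., there exist computable functions f, g : ℕ → ℕ such that for all e : ℕ, α e = φ (f e) and φ e = α (g e), where φ is the canonical numbering. If P ⊆ ℕ is nontrivial (P ≠ ∅ and P ≠ ℕ) and extensional with respect to α (for all m, n : ℕ, α m = α n implies (m ∈ P ↔ n ∈ P)), then P is undecidable. -/
/-- The canonical numbering of the partial computable functions:
`e ↦` the partial function computed by the `e`-th code. -/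
def canonicalNumbering (e : ℕ) : ℕ →. ℕ :=
  Nat.Partrec.Code.eval (Denumerable.ofNat Nat.Partrec.Code e)

/-- **Rice's theorem in general form.** Any nontrivial set of indices that is
extensional with respect to an acceptable numbering is undecidable. -/
theorem rice_theorem_acceptable (α : ℕ → (ℕ →. ℕ))
    (f g : ℕ → ℕ) (hf : Computable f) (hg : Computable g)
    (hcomp : ∀ e : ℕ, α e = canonicalNumbering (f e))
    (hcompl : ∀ e : ℕ, canonicalNumbering e = α (g e))
    (P : Set ℕ)
    (hne : P ≠ ∅) (hnuniv : P ≠ Set.univ)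
    (hext : ∀ m n : ℕ, α m = α n → (m ∈ P ↔ n ∈ P)) :
    ¬ ComputablePred (· ∈ P) := by
  intro hP
  have key : ∀ c : Nat.Partrec.Code, Nat.Partrec.Code.eval c = α (g (Encodable.encode c)) := by
    intro c
    rw [← hcompl, canonicalNumbering, Denumerable.ofNat_encode]
  have hfg : ∀ p, (g (f p) ∈ P ↔ p ∈ P) := fun p =>
    hext _ _ (by rw [← hcompl, ← hcomp])
  have hC : ComputablePred fun c : Nat.Partrec.Code =>
      c ∈ {c : Nat.Partrec.Code | g (Encodable.encode c) ∈ P} :=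
    ComputablePred.computable_of_manyOneReducible
      (q := (· ∈ P)) ⟨fun c => g (Encodable.encode c), hg.comp Computable.encode, fun _ => Iff.rfl⟩ hP
  rw [ComputablePred.rice₂ {c : Nat.Partrec.Code | g (Encodable.encode c) ∈ P} (fun a b h => hext _ _ (by rw [← key, ← key, h]))] at hC
  rcases hC with h | h
  · obtain ⟨p, hp⟩ := Set.nonempty_iff_ne_empty.2 hne
    have : Denumerable.ofNat Nat.Partrec.Code (f p) ∈
        {c : Nat.Partrec.Code | g (Encodable.encode c) ∈ P} := by
      simpa [hfg] using hp
    rw [h] at this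
    exact this
  · apply hnuniv
    refine Set.eq_univ_of_forall fun p => ?_
    have : Denumerable.ofNat Nat.Partrec.Code (f p) ∈
        {c : Nat.Partrec.Code | g (Encodable.encode c) ∈ P} := by
      rw [h]; trivial
    simpa [hfg] using this
end

section
/- Let b : ℕ ≃ ℕ be a bijection such that both b and its inverse b.symm are computable. Then there exists a computable function g : ℕ → ℕ such that for every e : ℕ, φ e = b ∘ φ (g e) ∘ b.symm as partial functions; that is, for all n : ℕ, φ e n = (φ (g e) (b.symm n)).map b, where φ is the canonical numbering of the partial computable functions. -/
/-- Every partial computable function arises, uniformly in its index, as the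
conjugate by a computable bijection `b` of another partial computable
function. -/
theorem uniform_completeness_conjugate (b : ℕ ≃ ℕ)
    (hb : Computable ⇑b) (hbsymm : Computable ⇑b.symm) :
    ∃ g : ℕ → ℕ, Computable g ∧
      ∀ e n : ℕ, canonicalNumbering e n =
        (canonicalNumbering (g e) (b.symm n)).map ⇑b := by
  obtain ⟨c, hc⟩ := Nat.Partrec.Code.exists_code.1 (Partrec.nat_iff.1 hb.partrec)
  obtain ⟨d, hd⟩ := Nat.Partrec.Code.exists_code.1 (Partrec.nat_iff.1 hbsymm.partrec)
  refine ⟨fun e => Encodable.encode (Nat.Partrec.Code.comp d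
    (Nat.Partrec.Code.comp (Denumerable.ofNat Nat.Partrec.Code e) c)), ?_, ?_⟩
  · exact (Primrec.encode.comp (Nat.Partrec.Code.primrec₂_comp.comp (Primrec.const d)
      (Nat.Partrec.Code.primrec₂_comp.comp (Primrec.ofNat _) (Primrec.const c)))).to_comp
  · intro e n
    simp only [canonicalNumbering, Denumerable.ofNat_encode, Nat.Partrec.Code.eval, hc, hd]
    change _ = Part.map b (((Part.some (b (b.symm n))).bind
      (fun x => (Denumerable.ofNat Nat.Partrec.Code e).eval x)).bind
        (fun x => Part.some (b.symm x)))
    ext a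
    simp only [Equiv.apply_symm_apply, Part.bind_some, Part.mem_map_iff,
      Part.mem_bind_iff, Part.mem_some_iff]
    constructor
    · intro h
      exact ⟨_, ⟨a, h, rfl⟩, b.apply_symm_apply a⟩
    · rintro ⟨_, ⟨x, hx, rfl⟩, rfl⟩
      simpa using hx
end

section
/- Let X be a type with a bijection b : X ≃ ℕ, and let ψ : ℕ → (X →. X) be a family of partial functions on X (thought of as the functions computed by the machines of some model of computation over X, such as RNN machines over finite sequences of rational vectors). Define the induced numbering ψ' : ℕ → (ℕ →. ℕ) by ψ' e n = (ψ e (b.symm n)).map b, and suppose ψ' is an acceptable numbering of the partial computable functions: there exist computable f, g : ℕ → ℕ with ψ' e = φ (f e) and φ e = ψ' (g e) for all e, where φ is the canonical numbering. Then every set P ⊆ ℕ that is nontrivial (P ≠ ∅ and P ≠ ℕ) and extensional with respect to ψ (for all m, n, ψ m = ψ n implies (m ∈ P ↔ n ∈ P)) is undecidable, i.e., ¬ ComputablePred (· ∈ P). -/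
/-- **Rice's theorem for machines over an abstract domain `X`** (e.g. RNN
machines over finite sequences of rational vectors): if the numbering induced
by conjugating the computed functions with a bijection `b : X ≃ ℕ` is an
acceptable numbering, then every nontrivial set of indices that is extensional
with respect to the family of computed functions is undecidable. -/
theorem rice_theorem_for_machines {X : Type*} (b : X ≃ ℕ)
    (ψ : ℕ → (X →. X))
    (ψ' : ℕ → (ℕ →. ℕ))
    (hψ' : ∀ (e : ℕ) (n : ℕ), ψ' e n = (ψ e (b.symm n)).map ⇑b)
    (f g : ℕ → ℕ) (hf : Computable f) (hg : Computable g)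
    (hcomp : ∀ e : ℕ, ψ' e = canonicalNumbering (f e))
    (hcompl : ∀ e : ℕ, canonicalNumbering e = ψ' (g e))
    (P : Set ℕ)
    (hne : P ≠ ∅) (hnuniv : P ≠ Set.univ)
    (hext : ∀ m n : ℕ, ψ m = ψ n → (m ∈ P ↔ n ∈ P)) :
    ¬ ComputablePred (· ∈ P) := by
  intro hP
  have hinj : ∀ m n, ψ' m = ψ' n → ψ m = ψ n := by
    intro m n h
    funext x
    have h1 := congrFun h (b x)
    rw [hψ', hψ', b.symm_apply_apply] at h1
    have h2 := congrArg (Part.map b.symm) h1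
    simpa [Part.map_map, Part.map_id'] using h2
  have hP' : ∀ m n, ψ' m = ψ' n → (m ∈ P ↔ n ∈ P) := fun m n h => hext m n (hinj m n h)
  have hgf : ∀ m, (g (f m) ∈ P ↔ m ∈ P) := fun m => hP' _ _ (by rw [← hcompl, hcomp])
  let C : Set Nat.Partrec.Code := {c | g (Encodable.encode c) ∈ P}
  have hC : ComputablePred fun c => c ∈ C :=
    ComputablePred.computable_of_manyOneReducible
      ⟨fun c => g (Encodable.encode c), hg.comp Computable.encode, fun _ => Iff.rfl⟩ hP
  have hCm : ∀ m, (Denumerable.ofNat Nat.Partrec.Code (f m) ∈ C ↔ m ∈ P) := by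
    intro m
    change g (Encodable.encode (Denumerable.ofNat Nat.Partrec.Code (f m))) ∈ P ↔ _
    rw [Denumerable.encode_ofNat]
    exact hgf m
  have hE : ∀ cf cg : Nat.Partrec.Code, cf.eval = cg.eval → (cf ∈ C ↔ cg ∈ C) := by
    intro cf cg h
    apply hP'
    rw [← hcompl, ← hcompl]
    simpa [canonicalNumbering] using h
  rcases (ComputablePred.rice₂ C hE).1 hC with h | h
  · apply hne
    ext m
    rw [← hCm m, h]
    simp
  · apply hnuniv
    ext m
    rw [← hCm m, h]
    simp
end
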